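/- For every real ρ ≥ 1 there is a constant C(ρ) > 0, depending only on ρ, with the following property. Let G = (V,E) be a finite connected graph with n vertices, diameter D ≥ 1, and doubling dimension at most ρ (with respect to the shortest-path metric), and let π be a probability distribution on V with π_u > 0 for all u. Then there exist a finite set V̂, a row-stochastic matrix P̂ on V̂ with positive stationary distribution π̂, a map f : V̂ → V and a subset T ⊆ V̂ with |T| = |V|, such that: (a) P̂ is a pseudo-lifting of π on G with respect to f and T; (b) the number of pairs (û,v̂) with û ≠ v̂ and P̂_{ûv̂} > 0 is at most C(ρ)·D·n^{1 − 1/(ρ+1)}; and (c) for every t ≥ C(ρ)·D and every û ∈ V̂, (1/2)·Σ_{v̂∈V̂} |P̂^t(û,v̂) − π̂(v̂)| ≤ 1/4. -/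

import Mathlib

/-!
The walk lives on three copies of `V`: resting states `T v`, upward states `U v` and downward
states `B v`. Fix a root `r` and a breadth-first tree. A walker at `T v` rests for a geometric time
of mean `16 (D + 1)`, then climbs the tree through the `U`-states to `U r`, waits there for a
geometric time of mean of order `D`, then descends through the `B`-states, choosing at each vertex
between its children and stopping in proportion to the `π`-mass of the subtrees, so that it enters
the resting states with law `π`. The flow equations give a stationary distribution with
`T v` of mass `π v / 2`; the waiting rate at `U r` is tuned to make the total mass `1`.

Mixing (`LiftData.minorization`): from every state, the probability of being at `U r` after
`4 (D + 1)` steps is at least `1/64`, and Doeblin's argument (`doeblin`) turns this into geometric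
convergence on the time scale `D`.

Size (`LiftData.card_edges`): there are at most `4 n` off-diagonal transitions, and the doubling
condition gives `n ≤ (2 D) ^ ρ` (`card_le_of_doubling`), hence
`n ≤ 2 D * n ^ (1 - 1 / (ρ + 1))`.
-/

/-- A matrix is row-stochastic: nonnegative entries and each row sums to 1. -/
def RowStochastic {W : Type*} [Fintype W] (P : Matrix W W ℝ) : Prop :=
  (∀ i j, 0 ≤ P i j) ∧ ∀ i, ∑ j, P i j = 1

/-- `π` is a stationary distribution for `P`: `πᵀP = πᵀ`. -/
def Stationary {W : Type*} [Fintype W] (P : Matrix W W ℝ) (π : W → ℝ) : Prop :=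
  ∀ j, ∑ i, π i * P i j = π j

/-- `G` has doubling dimension at most `ρ` (w.r.t. the shortest-path metric): every
ball of radius `r` can be covered by at most `2^ρ` balls of radius `r/2`. -/
def DoublingDimLE {V : Type*} [Fintype V] (G : SimpleGraph V) (ρ : ℝ) : Prop :=
  ∀ (x : V) (r : ℝ), 0 < r →
    ∃ s : Finset V, ((s.card : ℝ) ≤ (2 : ℝ) ^ ρ) ∧
      ∀ w : V, (G.dist x w : ℝ) < r → ∃ y ∈ s, (G.dist y w : ℝ) < r / 2

/-! ### Doeblin's condition -/

/-- A stochastic matrix with one column bounded below by `ε` contracts the `ℓ¹` norm of zero-sum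
row vectors by `1 - ε`: subtracting `ε` from that column does not affect the product. -/
lemma l1_contract {W : Type*} [Fintype W] [DecidableEq W] (Q : Matrix W W ℝ)
    (hQ : RowStochastic Q) (z : W) (ε : ℝ) (hz : ∀ w, ε ≤ Q w z)
    (μ : W → ℝ) (hμ : ∑ w, μ w = 0) :
    ∑ v, |Matrix.vecMul μ Q v| ≤ (1 - ε) * ∑ w, |μ w| := by
  have key : ∀ v, Matrix.vecMul μ Q v = ∑ w, μ w * (Q w v - if v = z then ε else 0) := by
    intro v
    simp only [Matrix.vecMul, dotProduct, mul_sub, Finset.sum_sub_distrib]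
    rw [← Finset.sum_mul, hμ]; simp
  calc ∑ v, |Matrix.vecMul μ Q v|
      ≤ ∑ v, ∑ w, |μ w| * (Q w v - if v = z then ε else 0) := by
        refine Finset.sum_le_sum fun v _ => ?_
        rw [key]
        refine (Finset.abs_sum_le_sum_abs _ _).trans (Finset.sum_le_sum fun w _ => ?_)
        rw [abs_mul, abs_of_nonneg (a := Q w v - _)]
        split_ifs with h
        · subst h; linarith [hz w]
        · simpa using hQ.1 w v
    _ = (1 - ε) * ∑ w, |μ w| := by
        rw [Finset.sum_comm, Finset.mul_sum]
        refine Finset.sum_congr rfl fun w _ => ?_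
        rw [← Finset.mul_sum, Finset.sum_sub_distrib, hQ.2]
        simp [mul_comm]

lemma rowStochastic_pow {W : Type*} [Fintype W] [DecidableEq W] (P : Matrix W W ℝ)
    (hP : RowStochastic P) (t : ℕ) : RowStochastic (P ^ t) := by
  induction t with
  | zero =>
    refine ⟨fun i j => ?_, fun i => ?_⟩
    · simp only [pow_zero, Matrix.one_apply]; split_ifs <;> norm_num
    · simp [Matrix.one_apply]
  | succ t ih =>
    refine ⟨fun i j => ?_, fun i => ?_⟩
    · rw [pow_succ, Matrix.mul_apply]
      exact Finset.sum_nonneg fun k _ => mul_nonneg (ih.1 _ _) (hP.1 _ _)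
    · simp only [pow_succ, Matrix.mul_apply]
      rw [Finset.sum_comm]
      simp only [← Finset.mul_sum, hP.2, mul_one, ih.2]

lemma sum_vecMul {W : Type*} [Fintype W] (Q : Matrix W W ℝ)
    (hQ : RowStochastic Q) (μ : W → ℝ) : ∑ v, Matrix.vecMul μ Q v = ∑ w, μ w := by
  simp only [Matrix.vecMul, dotProduct]
  rw [Finset.sum_comm]
  simp only [← Finset.mul_sum, hQ.2, mul_one]

/-- Doeblin's theorem: if all states reach `z` in exactly `N` steps with probability at least `ε`,
then the walk forgets its starting point geometrically on the time scale `N`. -/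
lemma doeblin {W : Type*} [Fintype W] [DecidableEq W] (P : Matrix W W ℝ) (hP : RowStochastic P)
    (ν : W → ℝ) (hν : ∀ w, 0 ≤ ν w) (hν1 : ∑ w, ν w = 1) (hs : Stationary P ν)
    (z : W) (N : ℕ) (ε : ℝ) (hε : ε ≤ 1) (hz : ∀ w, ε ≤ (P ^ N) w z) (q s : ℕ) (u : W) :
    ∑ v, |(P ^ (N * q + s)) u v - ν v| ≤ 2 * (1 - ε) ^ q := by
  set μ : W → ℝ := fun w => (if w = u then 1 else 0) - ν w with hμ
  have hμ0 : ∑ w, μ w = 0 := by simp [hμ, hν1]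
  have hsP : Matrix.vecMul ν P = ν := by
    ext j; simpa [Matrix.vecMul, dotProduct] using hs j
  have hst : ∀ t, Matrix.vecMul ν (P ^ t) = ν := by
    intro t
    induction t with
    | zero => simp
    | succ t ih => rw [pow_succ, ← Matrix.vecMul_vecMul, ih, hsP]
  have hrow : ∀ t v, (P ^ t) u v - ν v = Matrix.vecMul μ (P ^ t) v := by
    intro t v
    have h1 : Matrix.vecMul μ (P ^ t) v =
        (∑ w, (if w = u then 1 else 0) * (P ^ t) w v) - Matrix.vecMul ν (P ^ t) v := by
      simp only [hμ, Matrix.vecMul, dotProduct, sub_mul, Finset.sum_sub_distrib]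
    rw [h1, hst]; simp
  have hnorm : ∑ w, |μ w| ≤ 2 := by
    calc ∑ w, |μ w| ≤ ∑ w, ((if w = u then 1 else 0) + ν w) := by
          refine Finset.sum_le_sum fun w _ => ?_
          refine (abs_sub _ _).trans ?_
          rw [abs_of_nonneg (hν w)]
          gcongr
          split_ifs <;> simp
      _ = 2 := by rw [Finset.sum_add_distrib, hν1]; simp; norm_num
  have hq : ∀ q, ∑ v, |Matrix.vecMul μ (P ^ (N * q)) v| ≤ 2 * (1 - ε) ^ q := by
    intro q
    induction q with
    | zero => simpa using hnorm
    | succ q ih =>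
      rw [Nat.mul_succ, pow_add, ← Matrix.vecMul_vecMul]
      refine (l1_contract _ (rowStochastic_pow P hP N) z ε hz _ ?_).trans ?_
      · rw [sum_vecMul _ (rowStochastic_pow P hP _), hμ0]
      · rw [pow_succ]
        have : 0 ≤ 1 - ε := by linarith
        nlinarith [mul_le_mul_of_nonneg_left ih this]
  simp only [hrow]
  rw [pow_add, ← Matrix.vecMul_vecMul]
  have h0 := l1_contract (P ^ s) (rowStochastic_pow P hP s) z 0
    (fun w => (rowStochastic_pow P hP s).1 w z) (Matrix.vecMul μ (P ^ (N * q)))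
    (by rw [sum_vecMul _ (rowStochastic_pow P hP _), hμ0])
  linarith [hq q]

/-! ### Counting vertices of a doubling graph -/

lemma card_ball_le {V : Type*} [Fintype V] (G : SimpleGraph V) (hG : G.Connected) (ρ : ℝ)
    (h : DoublingDimLE G ρ) (k : ℕ) (x : V) :
    ({w : V | (G.dist x w : ℝ) < 2 ^ k}.ncard : ℝ) ≤ ((2 : ℝ) ^ ρ) ^ k := by
  classical
  induction k generalizing x with
  | zero =>
    have : {w : V | (G.dist x w : ℝ) < 2 ^ 0} ⊆ {x} := by
      intro w hw
      have h1 : (G.dist x w : ℝ) < 1 := by simpa using hw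
      have h2 : G.dist x w = 0 := by
        have : G.dist x w < 1 := by exact_mod_cast h1
        omega
      exact ((hG.dist_eq_zero_iff).1 h2).symm
    have h3 := Set.ncard_le_ncard this (Set.toFinite _)
    rw [Set.ncard_singleton] at h3
    simpa using (by exact_mod_cast h3 : (({w : V | (G.dist x w : ℝ) < 2 ^ 0}.ncard : ℝ)) ≤ 1)
  | succ k ih =>
    obtain ⟨s, hs, hcov⟩ := h x (2 ^ (k + 1)) (by positivity)
    have hsub : {w : V | (G.dist x w : ℝ) < 2 ^ (k + 1)} ⊆
        ⋃ y ∈ s, {w : V | (G.dist y w : ℝ) < 2 ^ k} := by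
      intro w hw
      obtain ⟨y, hy, hyw⟩ := hcov w hw
      simp only [Set.mem_iUnion]
      refine ⟨y, hy, ?_⟩
      have : (2 : ℝ) ^ (k + 1) / 2 = 2 ^ k := by rw [pow_succ]; ring
      rwa [this] at hyw
    have h1 := (Set.ncard_le_ncard hsub (Set.toFinite _)).trans
      (Finset.set_ncard_biUnion_le s fun y => {w : V | (G.dist y w : ℝ) < 2 ^ k})
    calc ({w : V | (G.dist x w : ℝ) < 2 ^ (k + 1)}.ncard : ℝ)
        ≤ ∑ y ∈ s, ({w : V | (G.dist y w : ℝ) < 2 ^ k}.ncard : ℝ) := by exact_mod_cast h1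
      _ ≤ ∑ y ∈ s, ((2 : ℝ) ^ ρ) ^ k := Finset.sum_le_sum fun y _ => ih y
      _ = s.card * ((2 : ℝ) ^ ρ) ^ k := by simp
      _ ≤ (2 : ℝ) ^ ρ * ((2 : ℝ) ^ ρ) ^ k := by gcongr
      _ = _ := by rw [pow_succ]; ring

lemma card_le_of_doubling {V : Type*} [Fintype V] (G : SimpleGraph V) (hG : G.Connected) (ρ : ℝ)
    (hρ : 1 ≤ ρ) (h : DoublingDimLE G ρ) (D : ℕ) (hD : 1 ≤ D) (hdist : ∀ u v, G.dist u v ≤ D) :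
    (Fintype.card V : ℝ) ≤ (2 * D : ℝ) ^ ρ := by
  obtain ⟨x⟩ := hG.nonempty
  have hlt : D < 2 ^ (Nat.log 2 D + 1) := Nat.lt_pow_succ_log_self (by norm_num) D
  have hle : 2 ^ Nat.log 2 D ≤ D := Nat.pow_log_le_self 2 (by omega)
  have h1 := card_ball_le G hG ρ h (Nat.log 2 D + 1) x
  have h2 : {w : V | (G.dist x w : ℝ) < 2 ^ (Nat.log 2 D + 1)} = Set.univ := by
    ext w
    simp only [Set.mem_ofPred_eq, Set.mem_univ, iff_true]
    exact_mod_cast (hdist x w).trans_lt hlt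
  rw [h2, Set.ncard_univ, Nat.card_eq_fintype_card] at h1
  refine h1.trans ?_
  rw [← Real.rpow_natCast, ← Real.rpow_mul (by norm_num), mul_comm ρ, Real.rpow_mul (by norm_num),
    Real.rpow_natCast]
  refine Real.rpow_le_rpow (by positivity) ?_ (by linarith)
  rw [pow_succ, mul_comm]
  have : ((2 : ℝ) ^ Nat.log 2 D) ≤ D := by exact_mod_cast hle
  linarith

lemma card_le_size {V : Type*} [Fintype V] (G : SimpleGraph V) (hG : G.Connected) (ρ : ℝ)
    (hρ : 1 ≤ ρ) (h : DoublingDimLE G ρ) (D : ℕ) (hD : 1 ≤ D) (hdist : ∀ u v, G.dist u v ≤ D) :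
    (Fintype.card V : ℝ) ≤ 2 * D * (Fintype.card V : ℝ) ^ (1 - 1 / (ρ + 1)) := by
  have h1 := card_le_of_doubling G hG ρ hρ h D hD hdist
  have := hG.nonempty
  have hn : (0 : ℝ) < Fintype.card V := by exact_mod_cast Fintype.card_pos
  have hD' : (1 : ℝ) ≤ D := by exact_mod_cast hD
  have h2 : (Fintype.card V : ℝ) ≤ (2 * D : ℝ) ^ (ρ + 1) :=
    h1.trans (Real.rpow_le_rpow_of_exponent_le (by linarith) (by linarith))
  have h3 : (Fintype.card V : ℝ) ^ (1 / (ρ + 1)) ≤ 2 * D := by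
    refine (Real.rpow_le_rpow hn.le h2 (by positivity)).trans_eq ?_
    rw [← Real.rpow_mul (by positivity), mul_one_div_cancel (by linarith), Real.rpow_one]
  calc (Fintype.card V : ℝ)
      = (Fintype.card V : ℝ) ^ (1 / (ρ + 1)) * (Fintype.card V : ℝ) ^ (1 - 1 / (ρ + 1)) := by
        rw [← Real.rpow_add hn]; simp
    _ ≤ _ := by gcongr

/-! ### Subtree masses -/

/-- A rooted tree on `V` of height at most `D`, encoded by its parent map and a depth function that
drops along it, together with a positive probability vector `π`. The value `p r` is irrelevant. -/
structure LiftData (V : Type) [Fintype V] where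
  /-- the root -/
  r : V
  /-- the parent map, meaningful off the root -/
  p : V → V
  /-- the depth -/
  d : V → ℕ
  /-- a bound on the height -/
  D : ℕ
  /-- the target distribution -/
  π : V → ℝ
  d_le : ∀ v, d v ≤ D
  d_root : d r = 0
  d_zero : ∀ v, d v = 0 → v = r
  d_lt : ∀ v, v ≠ r → d (p v) < d v
  π_pos : ∀ v, 0 < π v
  π_sum : ∑ v, π v = 1

namespace LiftData

variable {V : Type} [Fintype V] [DecidableEq V] (L : LiftData V)

/-- The mass at each vertex after all of `π` has moved `k` steps towards the root, mass leaving the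
tree when it steps out of the root. -/
def level : ℕ → V → ℝ
  | 0 => L.π
  | k + 1 => fun v => ∑ c, if c ≠ L.r ∧ L.p c = v then level k c else 0

/-- The `π`-mass of the subtree below `v`. -/
def S (v : V) : ℝ := ∑ k ∈ Finset.range (L.D + 1), L.level k v

lemma level_nonneg (k : ℕ) (v : V) : 0 ≤ L.level k v := by
  induction k generalizing v with
  | zero => exact (L.π_pos v).le
  | succ k ih =>
    refine Finset.sum_nonneg fun c _ => ?_
    split_ifs
    · exact ih c
    · exact le_rfl

lemma level_eq_zero (k : ℕ) (v : V) (h : L.D < L.d v + k) : L.level k v = 0 := by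
  induction k generalizing v with
  | zero => have := L.d_le v; omega
  | succ k ih =>
    refine Finset.sum_eq_zero fun c _ => ?_
    split_ifs with hc
    · have := L.d_lt c hc.1
      rw [hc.2] at this
      exact ih c (by omega)
    · rfl

/-- Summing over the children of all vertices is summing over the non-root vertices. -/
lemma sum_children (g : V → ℝ) :
    ∑ v, ∑ c, (if c ≠ L.r ∧ L.p c = v then g c else 0) = ∑ c, if c ≠ L.r then g c else 0 := by
  rw [Finset.sum_comm]
  refine Finset.sum_congr rfl fun c _ => ?_
  by_cases hc : c = L.r <;> simp [hc]

lemma sum_nonroot (g : V → ℝ) : ∑ c, (if c ≠ L.r then g c else 0) = ∑ c, g c - g L.r := by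
  have : ∀ c, (if c ≠ L.r then g c else 0) = g c - if c = L.r then g c else 0 := by
    intro c; by_cases hc : c = L.r <;> simp [hc]
  simp [this]

lemma sum_level_le (k : ℕ) : ∑ v, L.level k v ≤ 1 := by
  induction k with
  | zero => exact L.π_sum.le
  | succ k ih =>
    simp only [level]
    rw [sum_children, sum_nonroot]
    linarith [L.level_nonneg k L.r]

lemma S_eq (v : V) : L.S v = L.π v + ∑ c, if c ≠ L.r ∧ L.p c = v then L.S c else 0 := by
  have h1 : L.S v = L.π v + ∑ k ∈ Finset.range L.D, L.level (k + 1) v := by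
    rw [S, Finset.sum_range_succ', add_comm]; rfl
  have h2 : ∑ k ∈ Finset.range L.D, L.level (k + 1) v =
      ∑ k ∈ Finset.range (L.D + 1), L.level (k + 1) v := by
    rw [Finset.sum_range_succ, L.level_eq_zero (L.D + 1) v (by omega), add_zero]
  rw [h1, h2]
  simp only [level]
  rw [Finset.sum_comm]
  congr 1
  refine Finset.sum_congr rfl fun c _ => ?_
  split_ifs
  · rfl
  · simp

lemma S_nonneg (v : V) : 0 ≤ L.S v := Finset.sum_nonneg fun k _ => L.level_nonneg k v

lemma S_pos (v : V) : 0 < L.S v := by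
  rw [S_eq]
  refine add_pos_of_pos_of_nonneg (L.π_pos v) (Finset.sum_nonneg fun c _ => ?_)
  split_ifs
  · exact L.S_nonneg c
  · exact le_rfl

lemma S_root : L.S L.r = 1 := by
  have h : ∑ v, L.S v = ∑ v, (L.π v + ∑ c, if c ≠ L.r ∧ L.p c = v then L.S c else 0) :=
    Finset.sum_congr rfl fun v _ => L.S_eq v
  rw [Finset.sum_add_distrib, sum_children, sum_nonroot, L.π_sum] at h
  linarith

lemma sum_S_le : ∑ v, L.S v ≤ L.D + 1 := by
  simp only [S]
  rw [Finset.sum_comm]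
  refine (Finset.sum_le_sum fun k _ => L.sum_level_le k).trans ?_
  simp

/-! ### The lifted walk -/

/-- The rate at which resting states are left. -/
noncomputable def α : ℝ := 1 / (16 * (L.D + 1))

/-- The stationary mass of the upward copy of the root, chosen to make the total mass `1`. -/
noncomputable def Z : ℝ := 1 / 2 - L.α / 2 * (2 * ∑ v, L.S v - 1)

/-- The rate at which the upward copy of the root is left. -/
noncomputable def β : ℝ := L.α / 2 / L.Z

/-- The lifted walk. The three summands are the resting, the upward and the downward states. -/
noncomputable def P : Matrix (V ⊕ V ⊕ V) (V ⊕ V ⊕ V) ℝ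
  | .inl u, .inl v => if v = u then 1 - L.α else 0
  | .inl u, .inr (.inl v) => if v = u then L.α else 0
  | .inl _, .inr (.inr _) => 0
  | .inr (.inl _), .inl _ => 0
  | .inr (.inl u), .inr (.inl v) =>
      if u = L.r then (if v = L.r then 1 - L.β else 0) else (if v = L.p u then 1 else 0)
  | .inr (.inl u), .inr (.inr v) => if u = L.r then (if v = L.r then L.β else 0) else 0
  | .inr (.inr u), .inl v => if v = u then L.π u / L.S u else 0
  | .inr (.inr _), .inr (.inl _) => 0
  | .inr (.inr u), .inr (.inr v) => if v ≠ L.r ∧ L.p v = u then L.S v / L.S u else 0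

/-- The stationary distribution of the lifted walk. -/
noncomputable def ν : V ⊕ V ⊕ V → ℝ
  | .inl u => L.π u / 2
  | .inr (.inl u) => if u = L.r then L.Z else L.α / 2 * L.S u
  | .inr (.inr u) => L.α / 2 * L.S u

lemma α_pos : 0 < L.α := by unfold α; positivity

lemma α_mul : L.α * (L.D + 1) = 1 / 16 := by unfold α; field_simp

lemma α_le : L.α ≤ 1 / 16 := by
  have := L.α_mul
  nlinarith [L.α_pos, mul_nonneg L.α_pos.le (Nat.cast_nonneg (α := ℝ) L.D)]

lemma Z_ge : 7 / 16 ≤ L.Z := by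
  unfold Z
  nlinarith [L.α_mul, L.α_pos, mul_le_mul_of_nonneg_left L.sum_S_le L.α_pos.le]

lemma β_mul : L.Z * L.β = L.α / 2 := by
  have := L.Z_ge
  unfold β
  exact mul_div_cancel₀ _ (by linarith)

lemma β_pos : 0 < L.β := div_pos (by linarith [L.α_pos]) (by linarith [L.Z_ge])

lemma β_le : L.β ≤ 2 * L.α := by
  nlinarith [L.β_mul, L.Z_ge, mul_le_mul_of_nonneg_right L.Z_ge L.β_pos.le, L.α_pos]

lemma rowStochastic : RowStochastic L.P := by
  have hα := L.α_pos
  have hα' := L.α_le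
  have hβ := L.β_pos
  have hβ' := L.β_le
  refine ⟨?_, ?_⟩
  · rintro (u | u | u) (v | v | v) <;> simp only [P, le_refl] <;> split_ifs <;>
      first
        | linarith
        | exact div_nonneg (L.π_pos _).le (L.S_nonneg _)
        | exact div_nonneg (L.S_nonneg _) (L.S_nonneg _)
  · rintro (u | u | u)
    · simp [P]
    · by_cases hu : u = L.r <;> simp [P, hu]
    · simp only [Fintype.sum_sum_type, P, Finset.sum_const_zero, zero_add]
      have hS := L.S_pos u
      have : ∑ v, (if v ≠ L.r ∧ L.p v = u then L.S v / L.S u else 0) =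
          (∑ v, if v ≠ L.r ∧ L.p v = u then L.S v else 0) / L.S u := by
        rw [Finset.sum_div]
        refine Finset.sum_congr rfl fun v _ => ?_
        split_ifs <;> simp
      rw [this, Finset.sum_ite_eq' Finset.univ u, if_pos (Finset.mem_univ _), ← add_div,
        ← L.S_eq u, div_self hS.ne']

lemma ν_pos (w : V ⊕ V ⊕ V) : 0 < L.ν w := by
  have hα := L.α_pos
  rcases w with u | u | u <;> simp only [ν]
  · linarith [L.π_pos u]
  · have := L.S_pos u
    have := L.Z_ge
    split_ifs
    · linarith
    · positivity
  · have := L.S_pos u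
    positivity

lemma ν_sum : ∑ w, L.ν w = 1 := by
  have h1 : ∑ u, (if u = L.r then L.Z else L.α / 2 * L.S u) =
      L.Z + L.α / 2 * (∑ u, L.S u - 1) := by
    have h2 : ∀ u, (if u = L.r then L.Z else L.α / 2 * L.S u) =
        (if u = L.r then L.Z else 0) + L.α / 2 * (if u ≠ L.r then L.S u else 0) := by
      intro u; by_cases hu : u = L.r <;> simp [hu]
    rw [Finset.sum_congr rfl fun u _ => h2 u, Finset.sum_add_distrib, ← Finset.mul_sum,
      L.sum_nonroot, L.S_root]
    simp
  simp only [Fintype.sum_sum_type, ν]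
  rw [h1, ← Finset.sum_div, ← Finset.mul_sum, L.π_sum, Z]
  ring

/-- The inflow from the children into the upward copy of `v`. -/
lemma sum_up (v : V) : ∑ u, (if u ≠ L.r ∧ L.p u = v then L.α / 2 * L.S u else 0) =
    L.α / 2 * (L.S v - L.π v) := by
  rw [L.S_eq v, add_sub_cancel_left, Finset.mul_sum]
  refine Finset.sum_congr rfl fun u _ => ?_
  split_ifs <;> simp

lemma stationary : Stationary L.P L.ν := by
  rintro (v | v | v)
  · simp only [Fintype.sum_sum_type, P, ν]
    have := (L.S_pos v).ne'
    simp only [mul_ite, mul_zero, Finset.sum_const_zero, zero_add, Finset.sum_ite_eq,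
      Finset.mem_univ, if_true]
    field_simp
    ring
  · simp only [Fintype.sum_sum_type, P, ν]
    have h2 : ∀ u, ((if u = L.r then L.Z else L.α / 2 * L.S u) *
        if u = L.r then (if v = L.r then 1 - L.β else 0) else (if v = L.p u then 1 else 0)) =
        (if u = L.r then (if v = L.r then L.Z * (1 - L.β) else 0) else 0) +
          (if u ≠ L.r ∧ L.p u = v then L.α / 2 * L.S u else 0) := by
      intro u
      by_cases hu : u = L.r
      · simp [hu]
      · by_cases hv : v = L.p u
        · simp [hu, hv]
        · simp [hu, hv, Ne.symm hv]
    rw [Finset.sum_congr rfl fun u _ => h2 u, Finset.sum_add_distrib, L.sum_up]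
    simp only [mul_ite, mul_zero, Finset.sum_const_zero, add_zero, Finset.sum_ite_eq,
      Finset.sum_ite_eq', Finset.mem_univ, if_true]
    split_ifs with hv
    · subst hv
      rw [L.S_root]
      linarith [L.β_mul]
    · ring
  · simp only [Fintype.sum_sum_type, P, ν]
    by_cases hv : v = L.r
    · subst hv
      simp [L.β_mul, L.S_root]
    · have := (L.S_pos (L.p v)).ne'
      simp [hv]
      field_simp

/-! ### Minorization -/

lemma pow_succ_apply (t : ℕ) (w z : V ⊕ V ⊕ V) :
    (L.P ^ (t + 1)) w z = ∑ v, L.P w v * (L.P ^ t) v z := by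
  rw [pow_succ', Matrix.mul_apply]

lemma pow_nonneg' (t : ℕ) (w z : V ⊕ V ⊕ V) : 0 ≤ (L.P ^ t) w z :=
  (rowStochastic_pow L.P L.rowStochastic t).1 w z

lemma up_bound (t : ℕ) (v : V) (h : L.d v ≤ t) :
    1 - t * L.β ≤ (L.P ^ t) (.inr (.inl v)) (.inr (.inl L.r)) := by
  induction t generalizing v with
  | zero =>
    have := L.d_zero v (by omega)
    simp [this]
  | succ t ih =>
    rw [pow_succ_apply]
    have hβ := L.β_pos
    have hβ' := L.β_le
    have hα' := L.α_le
    push_cast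
    by_cases hv : v = L.r
    · subst hv
      simp only [Fintype.sum_sum_type, P]
      simp only [if_true, zero_mul, Finset.sum_const_zero, zero_add, ite_mul, Finset.sum_ite_eq',
        Finset.mem_univ]
      have h0 := L.pow_nonneg' t (.inr (.inr L.r)) (.inr (.inl L.r))
      have hr := ih L.r (by rw [L.d_root]; omega)
      nlinarith [mul_le_mul_of_nonneg_left hr (by linarith : 0 ≤ 1 - L.β), mul_nonneg hβ.le h0,
        mul_nonneg (Nat.cast_nonneg (α := ℝ) t) (sq_nonneg L.β)]
    · have hd := L.d_lt v hv
      simp only [Fintype.sum_sum_type, P]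
      simp only [hv, if_false, zero_mul, Finset.sum_const_zero, zero_add, ite_mul,
        Finset.sum_ite_eq', Finset.mem_univ, if_true, one_mul, add_zero]
      linarith [ih (L.p v) (by omega)]

/-- Waiting at the root costs at most a factor two over the time horizon `4 (D + 1)`. -/
lemma up_half (t : ℕ) (v : V) (h : L.d v ≤ t) (ht : t ≤ 4 * (L.D + 1)) :
    1 / 2 ≤ (L.P ^ t) (.inr (.inl v)) (.inr (.inl L.r)) := by
  have ht' : (t : ℝ) ≤ 4 * (L.D + 1) := by exact_mod_cast ht
  have h1 := mul_le_mul ht' L.β_le L.β_pos.le (by positivity)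
  linarith [L.up_bound t v h, L.α_mul]

lemma rest_bound (s : ℕ) (v : V) (ht : L.D + s ≤ 4 * (L.D + 1)) :
    s * (L.α / 4) ≤ (L.P ^ (L.D + s)) (.inl v) (.inr (.inl L.r)) := by
  induction s with
  | zero => simpa using L.pow_nonneg' _ _ _
  | succ s ih =>
    have hα := L.α_pos
    have hα' := L.α_le
    rw [← add_assoc, pow_succ_apply]
    simp only [Fintype.sum_sum_type, P]
    simp only [zero_mul, Finset.sum_const_zero, ite_mul, Finset.sum_ite_eq',
      Finset.mem_univ, if_true, add_zero]
    have h1 := L.up_half (L.D + s) v (by have := L.d_le v; omega) (by omega)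
    have h2 := ih (by omega)
    have hs : (s : ℝ) ≤ 4 * (L.D + 1) := by exact_mod_cast (by omega : s ≤ 4 * (L.D + 1))
    have h3 : s * L.α ≤ 1 := by nlinarith [L.α_mul, mul_le_mul_of_nonneg_right hs hα.le]
    push_cast
    nlinarith [mul_le_mul_of_nonneg_left h2 (by linarith : 0 ≤ 1 - L.α),
      mul_le_mul_of_nonneg_left h1 hα.le, mul_le_mul_of_nonneg_left h3 hα.le]

lemma rest_const (t : ℕ) (v : V) (h1 : 2 * L.D + 1 ≤ t) (h2 : t ≤ 4 * (L.D + 1)) :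
    1 / 64 ≤ (L.P ^ t) (.inl v) (.inr (.inl L.r)) := by
  obtain ⟨s, rfl⟩ : ∃ s, t = L.D + s := ⟨t - L.D, by omega⟩
  have h3 := L.rest_bound s v h2
  have hs : (L.D : ℝ) + 1 ≤ s := by exact_mod_cast (by omega : L.D + 1 ≤ s)
  nlinarith [mul_le_mul_of_nonneg_right hs L.α_pos.le, L.α_mul]

/-- A walker on its way down at depth `d v` enters a resting state within `D - d v + 1` steps. -/
lemma down_const (s : ℕ) (v : V) (h : L.D ≤ L.d v + s) (hs : s ≤ 2 * L.D + 2) :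
    1 / 64 ≤ (L.P ^ (2 * L.D + 1 + s + 1)) (.inr (.inr v)) (.inr (.inl L.r)) := by
  induction s generalizing v with
  | zero =>
    rw [pow_succ_apply]
    calc (1 : ℝ) / 64 = ∑ w, L.P (.inr (.inr v)) w * (1 / 64) := by
          rw [← Finset.sum_mul, L.rowStochastic.2, one_mul]
      _ ≤ _ := by
          refine Finset.sum_le_sum fun w _ => ?_
          rcases w with w | w | w
          · exact mul_le_mul_of_nonneg_left (L.rest_const _ w (by omega) (by omega))
              (L.rowStochastic.1 _ _)
          · simp [P]
          · have : ¬ (w ≠ L.r ∧ L.p w = v) := by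
              rintro ⟨hw, rfl⟩
              have := L.d_lt w hw
              have := L.d_le w
              omega
            simp only [P, if_neg this, zero_mul, le_refl]
  | succ s ih =>
    rw [pow_succ_apply]
    calc (1 : ℝ) / 64 = ∑ w, L.P (.inr (.inr v)) w * (1 / 64) := by
          rw [← Finset.sum_mul, L.rowStochastic.2, one_mul]
      _ ≤ _ := by
          refine Finset.sum_le_sum fun w _ => ?_
          rcases w with w | w | w
          · exact mul_le_mul_of_nonneg_left (L.rest_const _ w (by omega) (by omega))
              (L.rowStochastic.1 _ _)
          · simp [P]
          · by_cases hw : w ≠ L.r ∧ L.p w = v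
            · have h1 := L.d_lt w hw.1
              rw [hw.2] at h1
              exact mul_le_mul_of_nonneg_left (ih w (by omega) (by omega))
                (L.rowStochastic.1 _ _)
            · simp only [P, if_neg hw, zero_mul, le_refl]

lemma minorization (w : V ⊕ V ⊕ V) :
    1 / 64 ≤ (L.P ^ (4 * (L.D + 1))) w (.inr (.inl L.r)) := by
  rcases w with v | v | v
  · exact L.rest_const _ v (by omega) le_rfl
  · have := L.up_half (4 * (L.D + 1)) v (by have := L.d_le v; omega) le_rfl
    linarith
  · have := L.down_const (2 * L.D + 2) v (by omega) le_rfl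
    rwa [show 2 * L.D + 1 + (2 * L.D + 2) + 1 = 4 * (L.D + 1) by ring] at this

lemma mixing (t : ℕ) (ht : 4 * (L.D + 1) * 128 ≤ t) (u : V ⊕ V ⊕ V) :
    (1 / 2) * ∑ v, |(L.P ^ t) u v - L.ν v| ≤ 1 / 4 := by
  have h := doeblin L.P L.rowStochastic L.ν (fun w => (L.ν_pos w).le) L.ν_sum L.stationary
    (.inr (.inl L.r)) (4 * (L.D + 1)) (1 / 64) (by norm_num) L.minorization 128
    (t - 4 * (L.D + 1) * 128) u
  rw [Nat.add_sub_cancel' ht] at h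
  have : (1 - 1 / 64 : ℝ) ^ 128 ≤ 1 / 4 := by norm_num
  linarith

/-! ### Size and conformance -/

/-- Every off-diagonal transition is one of `T v → U v`, `U v → U (p v)`, `B v → T v` and the
unique transition into `B v`, which comes from `B (p v)` or, for the root, from `U r`. -/
lemma card_edges :
    {e : (V ⊕ V ⊕ V) × (V ⊕ V ⊕ V) | e.1 ≠ e.2 ∧ 0 < L.P e.1 e.2}.ncard ≤
      4 * Fintype.card V := by
  let F : Fin 4 × V → (V ⊕ V ⊕ V) × (V ⊕ V ⊕ V) := fun x =>
    match x.1 with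
    | 0 => (.inl x.2, .inr (.inl x.2))
    | 1 => (.inr (.inl x.2), .inr (.inl (L.p x.2)))
    | 2 => (.inr (.inr x.2), .inl x.2)
    | 3 => (if x.2 = L.r then .inr (.inl L.r) else .inr (.inr (L.p x.2)), .inr (.inr x.2))
  have hsub : {e : (V ⊕ V ⊕ V) × (V ⊕ V ⊕ V) | e.1 ≠ e.2 ∧ 0 < L.P e.1 e.2} ⊆ Set.range F := by
    rintro ⟨u | u | u, v | v | v⟩ ⟨hne, hpos⟩ <;> simp only [P] at hpos hne
    · split_ifs at hpos with h
      · exact absurd (by rw [h]) hne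
      · exact absurd hpos (lt_irrefl _)
    · split_ifs at hpos with h
      · exact ⟨(0, u), by simp [F, h]⟩
      · exact absurd hpos (lt_irrefl _)
    · exact absurd hpos (lt_irrefl _)
    · exact absurd hpos (lt_irrefl _)
    · split_ifs at hpos with h h' h'
      · exact absurd (by rw [h, h']) hne
      · exact absurd hpos (lt_irrefl _)
      · exact ⟨(1, u), by simp [F, h']⟩
      · exact absurd hpos (lt_irrefl _)
    · split_ifs at hpos with h h'
      · exact ⟨(3, v), by simp [F, h, h']⟩
      · exact absurd hpos (lt_irrefl _)
      · exact absurd hpos (lt_irrefl _)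
    · split_ifs at hpos with h
      · exact ⟨(2, u), by simp [F, h]⟩
      · exact absurd hpos (lt_irrefl _)
    · exact absurd hpos (lt_irrefl _)
    · split_ifs at hpos with h
      · exact ⟨(3, v), by simp [F, h]⟩
      · exact absurd hpos (lt_irrefl _)
  refine (Set.ncard_le_ncard hsub (Set.toFinite _)).trans ?_
  rw [← Set.image_univ]
  refine (Set.ncard_image_le (Set.toFinite _)).trans ?_
  rw [Set.ncard_univ, Nat.card_eq_fintype_card]
  simp

/-- The projection of the lifted walk to the base graph. -/
def proj : V ⊕ V ⊕ V → V := Sum.elim id (Sum.elim id id)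

lemma conformant (G : SimpleGraph V) (hadj : ∀ v, v ≠ L.r → G.Adj v (L.p v))
    (u v : V ⊕ V ⊕ V) (hpos : 0 < L.P u v) : G.Adj (proj u) (proj v) ∨ proj u = proj v := by
  rcases u with u | u | u <;> rcases v with v | v | v <;>
    simp only [P, lt_irrefl] at hpos <;> simp only [proj, Sum.elim_inl, Sum.elim_inr, id]
  · split_ifs at hpos with h
    · exact .inr h.symm
    · exact absurd hpos (lt_irrefl _)
  · split_ifs at hpos with h
    · exact .inr h.symm
    · exact absurd hpos (lt_irrefl _)
  · split_ifs at hpos with h h' h'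
    · exact .inr (h.trans h'.symm)
    · exact absurd hpos (lt_irrefl _)
    · exact .inl (h' ▸ hadj u h)
    · exact absurd hpos (lt_irrefl _)
  · split_ifs at hpos with h h'
    · exact .inr (h.trans h'.symm)
    · exact absurd hpos (lt_irrefl _)
    · exact absurd hpos (lt_irrefl _)
  · split_ifs at hpos with h
    · exact .inr h.symm
    · exact absurd hpos (lt_irrefl _)
  · split_ifs at hpos with h
    · exact .inl (h.2 ▸ (hadj v h.1).symm)
    · exact absurd hpos (lt_irrefl _)

end LiftData

/-- The first step of a geodesic to `r` serves as the parent in a breadth-first tree. -/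
lemma exists_parent {V : Type} (G : SimpleGraph V) (hG : G.Connected) (r v : V) (hv : v ≠ r) :
    ∃ w, G.Adj v w ∧ G.dist w r < G.dist v r := by
  obtain ⟨q, hq⟩ := hG.exists_walk_length_eq_dist v r
  cases q with
  | nil => exact absurd rfl hv
  | cons h q =>
    refine ⟨_, h, ?_⟩
    have := SimpleGraph.dist_le q
    rw [SimpleGraph.Walk.length_cons] at hq
    omega

/-- Theorem 1 of the paper: for every `ρ ≥ 1` there is `C(ρ) > 0` such
that every connected graph with `n` vertices, diameter `D ≥ 1` and doubling dimension
at most `ρ` admits, for any positive probability distribution `π`, a pseudo-lifted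
random walk of size `O(D·n^{1-1/(ρ+1)})` mixing in time `O(D)`. -/
theorem pseudo_lifting_doubling_exists (ρ : ℝ) (hρ : 1 ≤ ρ) :
    ∃ C : ℝ, 0 < C ∧
    ∀ (V : Type) [Fintype V] [DecidableEq V] (G : SimpleGraph V) [DecidableRel G.Adj]
      (D : ℕ) (π : V → ℝ),
      G.Connected → 1 ≤ D →
      (∀ u v : V, G.dist u v ≤ D) → (∃ u v : V, G.dist u v = D) →
      DoublingDimLE G ρ →
      (∀ u, 0 < π u) → (∑ u, π u = 1) →
      ∃ (W : Type) (_ : Fintype W) (_ : DecidableEq W)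
        (Phat : Matrix W W ℝ) (pihat : W → ℝ) (f : W → V) (T : Finset W),
        -- Phat is a random walk with positive stationary distribution pihat
        RowStochastic Phat ∧ (∀ wh, 0 < pihat wh) ∧ Stationary Phat pihat ∧
        -- (a) pseudo-lifting: graph conformance ...
        (∀ uh vh, 0 < Phat uh vh → G.Adj (f uh) (f vh) ∨ f uh = f vh) ∧
        -- ... and |T| = |V| with pihat(f⁻¹(u) ∩ T) = π(u)/2 for every u
        T.card = Fintype.card V ∧
        (∀ u : V, ∑ wh ∈ T.filter (fun wh => f wh = u), pihat wh = π u / 2) ∧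
        -- (b) size bound: at most C(ρ)·D·n^{1-1/(ρ+1)} off-diagonal positive entries
        ({p : W × W | p.1 ≠ p.2 ∧ 0 < Phat p.1 p.2}.ncard : ℝ)
          ≤ C * (D : ℝ) * (Fintype.card V : ℝ) ^ (1 - 1 / (ρ + 1)) ∧
        -- (c) mixing: total-variation distance at most 1/4 after C(ρ)·D steps
        (∀ t : ℕ, C * (D : ℝ) ≤ (t : ℝ) → ∀ uh : W,
          (1 / 2) * ∑ vh, |(Phat ^ t) uh vh - pihat vh| ≤ 1 / 4) := by
  refine ⟨1024, by norm_num, ?_⟩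
  intro V _ _ G _ D π hG hD hdist _ hdoub hπ hπ1
  obtain ⟨r⟩ := hG.nonempty
  have hpar : ∀ v, ∃ w, v ≠ r → G.Adj v w ∧ G.dist w r < G.dist v r := by
    intro v
    by_cases hv : v = r
    · exact ⟨v, fun h => absurd hv h⟩
    · obtain ⟨w, hw⟩ := exists_parent G hG r v hv
      exact ⟨w, fun _ => hw⟩
  choose p hp using hpar
  let L : LiftData V :=
    { r := r
      p := p
      d := fun v => G.dist v r
      D := D
      π := π
      d_le := fun v => hdist v r
      d_root := SimpleGraph.dist_self
      d_zero := fun v h => hG.dist_eq_zero_iff.1 h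
      d_lt := fun v hv => (hp v hv).2
      π_pos := hπ
      π_sum := hπ1 }
  refine ⟨V ⊕ V ⊕ V, inferInstance, inferInstance, L.P, L.ν, LiftData.proj,
    Finset.univ.map Function.Embedding.inl, L.rowStochastic, L.ν_pos, L.stationary,
    L.conformant G fun v hv => (hp v hv).1, by simp, ?_, ?_, ?_⟩
  · intro u
    rw [Finset.sum_filter, Finset.sum_map]
    simp [LiftData.proj, LiftData.ν, L]
  · have h1 : ({e : (V ⊕ V ⊕ V) × (V ⊕ V ⊕ V) | e.1 ≠ e.2 ∧ 0 < L.P e.1 e.2}.ncard : ℝ) ≤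
        4 * Fintype.card V := by exact_mod_cast L.card_edges
    have h2 := card_le_size G hG ρ hρ hdoub D hD hdist
    have h3 : (0 : ℝ) ≤ D * (Fintype.card V : ℝ) ^ (1 - 1 / (ρ + 1)) := by positivity
    refine h1.trans ?_
    linarith
  · intro t ht u
    refine L.mixing t ?_ u
    have ht' : 1024 * D ≤ t := by exact_mod_cast ht
    change 4 * (D + 1) * 128 ≤ t
    omega
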